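/- arXiv:2605.10883 — 5 statements merged into one kernel-verified Lean document; each statement's English description precedes it below -/
import Mathlib

section
/- Let a, b be integers with b > a ≥ 2. Suppose f₂(π/a, 0) > 0 and there exists α̂₁ in the α₁-interval of D with α̂₁ < π/a such that f₂(α̂₁, 0) ≤ 0. Then the edge-condition system f₁(α₁,β₁) = 0, f₂(α₁,β₁) = 0 has exactly one solution (α₁, β₁) in D. -/
open Real

/-- `B₀₀ = 1 − cos²α₁ − cos²α₂ − cos²β₁ − 2·cos α₁·cos α₂·cos β₁` with `α₂ = 2π/a − 2α₁`. -/
noncomputable def B00 (a : ℤ) (α₁ β₁ : ℝ) : ℝ :=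
  1 - cos α₁ ^ 2 - cos (2 * π / (a : ℝ) - 2 * α₁) ^ 2 - cos β₁ ^ 2
    - 2 * cos α₁ * cos (2 * π / (a : ℝ) - 2 * α₁) * cos β₁

/-- `B₁₁ = 1 − cos²α₁ − cos²β₁ − cos²β₂ − 2·cos α₁·cos β₁·cos β₂` with `β₂ = 2π/b − 2β₁`. -/
noncomputable def B11 (b : ℤ) (α₁ β₁ : ℝ) : ℝ :=
  1 - cos α₁ ^ 2 - cos β₁ ^ 2 - cos (2 * π / (b : ℝ) - 2 * β₁) ^ 2
    - 2 * cos α₁ * cos β₁ * cos (2 * π / (b : ℝ) - 2 * β₁)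

/-- `f₁(α₁,β₁) = B₀₀·sin²β₁ − B₁₁·sin²α₂`. -/
noncomputable def f1 (a b : ℤ) (α₁ β₁ : ℝ) : ℝ :=
  B00 a α₁ β₁ * sin β₁ ^ 2 - B11 b α₁ β₁ * sin (2 * π / (a : ℝ) - 2 * α₁) ^ 2

/-- `f₂(α₁,β₁) = B₁₁·sin²α₁ − B₀₀·sin²β₂`. -/
noncomputable def f2 (a b : ℤ) (α₁ β₁ : ℝ) : ℝ :=
  B11 b α₁ β₁ * sin α₁ ^ 2 - B00 a α₁ β₁ * sin (2 * π / (b : ℝ) - 2 * β₁) ^ 2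

/-- The `α₁`-interval of the domain `D`. -/
noncomputable def alphaI (a : ℤ) : Set ℝ :=
  if a = 2 then Set.Icc (π / 3) (π / 2)
  else if a = 3 then Set.Icc (π / 12) (π / 3)
  else Set.Icc 0 (π / (a : ℝ))

/-- The domain `D ⊂ ℝ²`. -/
noncomputable def Dom (a b : ℤ) : Set (ℝ × ℝ) :=
  alphaI a ×ˢ Set.Icc 0 (π / (b : ℝ))

open Set

/-!
Since `B₁₁` enters both equations linearly, it can be eliminated:
`f₁ sin² α₁ + f₂ sin² α₂ = B₀₀ ((sin α₁ sin β₁)² - (sin α₂ sin β₂)²)`.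

For `a = 2` and `b ≥ 6` one has `α₂ = π - 2 α₁` and `B₀₀ < 0` on `D`, so the system says that
`f₂ = 0` on the curve `sin β₁ = 2 cos α₁ sin β₂`. Along this curve, parametrized by
`β₁ ∈ [0, 2π/(3b)]`, the quotient `f₂ / sin² α₁` is continuous and strictly decreasing; it equals
`f₂(π/2, 0)` at the start and is nonpositive at the end, where `α₁ = π/3` and `β₁ = β₂`. So it
vanishes exactly once.

The other cases contradict the existence of `α̂₁`. For `a = 2` and `3 ≤ b ≤ 5`, `f₂(·, 0)` is
positive on `[π/3, π/2)`. For `a ≥ 3`, write `f₂(·, 0) = p² - q²`: if `2π/b ≤ π/a`, then `q / p` is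
largest at `π/a`, so that positivity at `π/a` propagates to `[0, π/a]`, and if `2π/b > π/a`, then
`p > q` on `[0, π/a]`.
-/

/-! ### Elementary inequalities -/

lemma one_half_le_cos {x : ℝ} (hx : 0 ≤ x) (hx' : x ≤ π / 3) : 1 / 2 ≤ cos x := by
  rw [← cos_pi_div_three]
  exact cos_le_cos_of_nonneg_of_le_pi hx (by linarith [pi_pos]) hx'

lemma cos_le_one_half {x : ℝ} (hx : π / 3 ≤ x) (hx' : x ≤ π) : cos x ≤ 1 / 2 := by
  rw [← cos_pi_div_three]
  exact cos_le_cos_of_nonneg_of_le_pi (by linarith [pi_pos]) hx' hx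

lemma one_half_lt_cos {x : ℝ} (hx : 0 ≤ x) (hx' : x < π / 3) : 1 / 2 < cos x := by
  rw [← cos_pi_div_three]
  exact cos_lt_cos_of_nonneg_of_le_pi hx (by linarith [pi_pos]) hx'

lemma arccos_mem_Icc_pi_div_three_pi_div_two {c : ℝ} (hc : c ∈ Icc (0 : ℝ) (1 / 2)) :
    arccos c ∈ Icc (π / 3) (π / 2) := by
  refine ⟨?_, arccos_le_pi_div_two.2 hc.1⟩
  rw [← arccos_cos (x := π / 3) (by positivity) (by linarith [pi_pos]), cos_pi_div_three]
  exact arccos_le_arccos hc.2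

lemma sub_div_one_sub_sq_le {C C' c c' : ℝ} (hc : 0 ≤ c) (hcc : c ≤ c') (hc' : c' < 1)
    (hCC : C' ≤ C) (hC : C ≤ 1) : (C' - c') / (1 - c' ^ 2) ≤ (C - c) / (1 - c ^ 2) := by
  have hd : 0 < 1 - c ^ 2 := by nlinarith
  have hd' : 0 < 1 - c' ^ 2 := by nlinarith
  have hnum : 0 ≤ (1 - c) * (1 - c') + (1 - C) * (c + c') :=
    add_nonneg (mul_nonneg (by linarith) (by linarith)) (mul_nonneg (by linarith) (by linarith))
  calc (C' - c') / (1 - c' ^ 2) ≤ (C - c') / (1 - c' ^ 2) := by gcongr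
    _ ≤ (C - c) / (1 - c ^ 2) := by
      rw [div_le_div_iff₀ hd' hd]
      linarith [mul_nonneg (sub_nonneg.2 hcc) hnum]

lemma add_three_mul_sub_pos {C c : ℝ} (hC : 0 < C) (hc : c ∈ Icc (0 : ℝ) (1 / 2)) :
    0 < C + 3 * c - 4 * c ^ 3 := by
  have : 0 ≤ c * (3 - 4 * c ^ 2) := mul_nonneg hc.1 (by nlinarith [hc.1, hc.2])
  linarith

/-! ### Factorization and elimination -/

lemma one_sub_cos_sq_sub_eq_neg_mul (u v w : ℝ) :
    1 - cos u ^ 2 - cos v ^ 2 - cos w ^ 2 - 2 * cos u * cos v * cos w =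
      -((cos u + cos (v + w)) * (cos u + cos (v - w))) := by
  rw [cos_add, cos_sub]
  linear_combination (-sin v ^ 2) * sin_sq_add_cos_sq w + (cos w ^ 2 - 1) * sin_sq_add_cos_sq v

lemma B11_eq_B00 (b : ℤ) (x y : ℝ) : B11 b x y = B00 b y x := by
  unfold B11 B00
  ring

lemma B00_eq_neg_mul (a : ℤ) (x y : ℝ) :
    B00 a x y = -((cos y + cos (2 * π / a - x)) * (cos y + cos (2 * π / a - 3 * x))) := by
  have h := one_sub_cos_sq_sub_eq_neg_mul y (2 * π / a - 2 * x) x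
  rw [show 2 * π / a - 2 * x + x = 2 * π / a - x by ring,
    show 2 * π / a - 2 * x - x = 2 * π / a - 3 * x by ring] at h
  rw [← h, B00]
  ring

lemma f1_mul_sin_sq_add_f2_mul_sin_sq (a b : ℤ) (x y : ℝ) :
    f1 a b x y * sin x ^ 2 + f2 a b x y * sin (2 * π / a - 2 * x) ^ 2 =
      B00 a x y * ((sin x * sin y) ^ 2 -
        (sin (2 * π / a - 2 * x) * sin (2 * π / b - 2 * y)) ^ 2) := by
  unfold f1 f2
  ring

lemma f2_zero_right (a b : ℤ) (x : ℝ) :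
    f2 a b x 0 = ((cos x + cos (2 * π / a - 2 * x)) * sin (2 * π / b)) ^ 2 -
      ((cos x + cos (2 * π / b)) * sin x) ^ 2 := by
  simp only [f2, B00, B11, cos_zero, mul_zero, sub_zero]
  ring

lemma alphaI_subset_Icc (a : ℤ) : alphaI a ⊆ Icc 0 (π / a) := by
  unfold alphaI
  split_ifs with h2 h3
  · subst h2
    exact Icc_subset_Icc (by positivity) (by norm_num)
  · subst h3
    exact Icc_subset_Icc (by positivity) (by norm_num)
  · exact Subset.rfl

/-! ### The sign of `f2` on the edge `β₁ = 0` -/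

section Edge

variable {A B x : ℝ}

lemma cos_add_cos_two_mul_sub_pos (hx : 0 ≤ x) (hxA : x ≤ A) (hA : A < π / 2) :
    0 < cos x + cos (2 * A - 2 * x) := by
  have : cos (π - x) < cos (2 * A - 2 * x) :=
    cos_lt_cos_of_nonneg_of_le_pi (by linarith) (by linarith) (by linarith)
  rw [cos_pi_sub] at this
  linarith

lemma sin_mul_cos_add_one_le (hx : 0 ≤ x) (hxA : x ≤ A) (hA : A ≤ π / 3) :
    sin x * (cos x + 1) ≤ sin A * (cos x + cos (2 * A - 2 * x)) := by
  obtain ⟨t, rfl⟩ : ∃ t, x = A - t := ⟨A - x, by ring⟩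
  have hπ := pi_pos
  have hC : 1 / 2 ≤ cos A := one_half_le_cos (by linarith) hA
  have hc : 1 / 2 ≤ cos t := one_half_le_cos (by linarith) (by linarith)
  have hs : 0 ≤ sin t := sin_nonneg_of_nonneg_of_le_pi (by linarith) (by linarith)
  have hsS : sin t ≤ sin A :=
    sin_le_sin_of_le_of_le_pi_div_two (by linarith) (by linarith) (by linarith)
  have hc1 := cos_le_one t
  have expansion : sin A * (cos (A - t) + cos (2 * A - 2 * (A - t))) -
      sin (A - t) * (cos (A - t) + 1) =
        sin A * (1 - cos t) * (cos A + (2 * cos A - 1) * cos t) +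
        sin t * (cos A * (1 - cos t) + (2 * cos A - 1) * (cos A + 1) * cos t +
          sin A * (sin A - sin t)) := by
    rw [show 2 * A - 2 * (A - t) = 2 * t by ring, cos_two_mul, sin_sub, cos_sub]
    grind [sin_sq_add_cos_sq A, sin_sq_add_cos_sq t]
  have h1 : 0 ≤ sin A * (1 - cos t) * (cos A + (2 * cos A - 1) * cos t) :=
    mul_nonneg (mul_nonneg (by linarith) (by linarith))
      (add_nonneg (by linarith) (mul_nonneg (by linarith) (by linarith)))
  have h2 : 0 ≤ cos A * (1 - cos t) + (2 * cos A - 1) * (cos A + 1) * cos t :=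
    add_nonneg (mul_nonneg (by linarith) (by linarith))
      (mul_nonneg (mul_nonneg (by linarith) (by linarith)) (by linarith))
  have h3 : 0 ≤ sin A * (sin A - sin t) := mul_nonneg (by linarith) (by linarith)
  linarith [mul_nonneg hs (add_nonneg h2 h3)]

lemma sin_mul_cos_add_cos_le (hx : 0 ≤ x) (hxA : x ≤ A) (hA : A ≤ π / 3) :
    sin x * (cos x + cos A) * (1 + cos A) ≤
      sin A * (2 * cos A) * (cos x + cos (2 * A - 2 * x)) := by
  obtain ⟨t, rfl⟩ : ∃ t, x = A - t := ⟨A - x, by ring⟩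
  have hπ := pi_pos
  have hC : 1 / 2 ≤ cos A := one_half_le_cos (by linarith) hA
  have hc : 1 / 2 ≤ cos t := one_half_le_cos (by linarith) (by linarith)
  have hs : 0 ≤ sin t := sin_nonneg_of_nonneg_of_le_pi (by linarith) (by linarith)
  have hsS : sin t ≤ sin A :=
    sin_le_sin_of_le_of_le_pi_div_two (by linarith) (by linarith) (by linarith)
  have hC1 := cos_le_one A
  have hc1 := cos_le_one t
  have expansion : sin A * (2 * cos A) * (cos (A - t) + cos (2 * A - 2 * (A - t))) -
      sin (A - t) * (cos (A - t) + cos A) * (1 + cos A) =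
        sin A * cos A * (1 - cos A) * (1 - cos t) +
        2 * sin A * cos A * (1 - cos A) * sin t * (sin A - sin t) +
        sin t * (cos A ^ 2 * (2 * sin A ^ 2 + (1 + cos A)) * (1 - cos t) +
          (1 + cos A) * (2 * cos A - 1) * (1 + cos A * (2 - cos A)) * cos t) := by
    rw [show 2 * A - 2 * (A - t) = 2 * t by ring, cos_two_mul, sin_sub, cos_sub]
    grind [sin_sq_add_cos_sq A, sin_sq_add_cos_sq t]
  have h1 : 0 ≤ sin A * cos A * (1 - cos A) :=
    mul_nonneg (mul_nonneg (by linarith) (by linarith)) (by linarith)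
  have h2 : 0 ≤ cos A ^ 2 * (2 * sin A ^ 2 + (1 + cos A)) * (1 - cos t) :=
    mul_nonneg (by positivity) (by linarith)
  have h3 : 0 ≤ (1 + cos A) * (2 * cos A - 1) * (1 + cos A * (2 - cos A)) * cos t :=
    mul_nonneg (mul_nonneg (mul_nonneg (by linarith) (by linarith))
      (add_nonneg zero_le_one (mul_nonneg (by linarith) (by linarith)))) (by linarith)
  linarith [mul_nonneg h1 (sub_nonneg.2 hc1), mul_nonneg (mul_nonneg h1 hs) (sub_nonneg.2 hsS),
    mul_nonneg hs (add_nonneg h2 h3)]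

/- Both sides are affine in `w`, so the case `w = cos A` and a comparison of slopes suffice. -/
lemma sin_mul_cos_add_le {w : ℝ} (hx : 0 ≤ x) (hxA : x ≤ A) (hA : A ≤ π / 3) (hw : cos A ≤ w) :
    sin x * (cos x + w) * (1 + cos A) ≤
      sin A * (cos A + w) * (cos x + cos (2 * A - 2 * x)) := by
  have hπ := pi_pos
  have hsx : 0 ≤ sin x := sin_nonneg_of_nonneg_of_le_pi hx (by linarith)
  have hcos : cos A ≤ cos x := cos_le_cos_of_nonneg_of_le_pi hx (by linarith) hxA
  have slope : sin x * (1 + cos A) ≤ sin A * (cos x + cos (2 * A - 2 * x)) :=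
    calc sin x * (1 + cos A) ≤ sin x * (cos x + 1) :=
          mul_le_mul_of_nonneg_left (by linarith) hsx
      _ ≤ _ := sin_mul_cos_add_one_le hx hxA hA
  linarith [sin_mul_cos_add_cos_le hx hxA hA,
    mul_le_mul_of_nonneg_left slope (sub_nonneg.2 hw)]

lemma cos_add_cos_mul_sin_lt_of_lt (hx : 0 ≤ x) (hxA : x ≤ A) (hA : A ≤ π / 3) (hAB : A < B)
    (hB : B ≤ π / 2) :
    (cos x + cos B) * sin x < (cos x + cos (2 * A - 2 * x)) * sin B := by
  have hQ := cos_add_cos_two_mul_sub_pos hx hxA (by linarith)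
  have hsx : 0 ≤ sin x := sin_nonneg_of_nonneg_of_le_pi hx (by linarith)
  have hsA : 0 ≤ sin A := sin_nonneg_of_nonneg_of_le_pi (by linarith) (by linarith)
  have hcA : 1 / 2 ≤ cos A := one_half_le_cos (by linarith) hA
  have hcB : cos B ≤ cos A := cos_le_cos_of_nonneg_of_le_pi (by linarith) (by linarith) hAB.le
  have hsAB : sin A < sin B := sin_lt_sin_of_lt_of_le_pi_div_two (by linarith) hB hAB
  have atA : sin x * (cos x + cos A) ≤ sin A * (cos x + cos (2 * A - 2 * x)) := by
    refine le_of_mul_le_mul_right ?_ (by linarith : 0 < 1 + cos A)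
    calc sin x * (cos x + cos A) * (1 + cos A)
        ≤ sin A * (2 * cos A) * (cos x + cos (2 * A - 2 * x)) :=
          sin_mul_cos_add_cos_le hx hxA hA
      _ ≤ sin A * (1 + cos A) * (cos x + cos (2 * A - 2 * x)) := by
          gcongr; linarith [cos_le_one A]
      _ = _ := by ring
  calc (cos x + cos B) * sin x ≤ (cos x + cos A) * sin x := by gcongr
    _ ≤ (cos x + cos (2 * A - 2 * x)) * sin A := by linarith
    _ < (cos x + cos (2 * A - 2 * x)) * sin B := by gcongr

lemma cos_add_cos_mul_sin_lt (hx : 0 ≤ x) (hxA : x ≤ A) (hA : A ≤ π / 3) (hB0 : 0 ≤ B)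
    (hB : B ≤ π / 2) (h : (cos A + cos B) * sin A < (cos A + 1) * sin B) :
    (cos x + cos B) * sin x < (cos x + cos (2 * A - 2 * x)) * sin B := by
  rcases lt_or_ge A B with hAB | hBA
  · exact cos_add_cos_mul_sin_lt_of_lt hx hxA hA hAB hB
  have hπ := pi_pos
  have hQ := cos_add_cos_two_mul_sub_pos hx hxA (by linarith)
  have hcA : 1 / 2 ≤ cos A := one_half_le_cos (by linarith) hA
  have hcAB : cos A ≤ cos B := cos_le_cos_of_nonneg_of_le_pi hB0 (by linarith) hBA
  refine lt_of_mul_lt_mul_right ?_ (by linarith : 0 ≤ 1 + cos A)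
  calc (cos x + cos B) * sin x * (1 + cos A)
      = sin x * (cos x + cos B) * (1 + cos A) := by ring
    _ ≤ (cos A + cos B) * sin A * (cos x + cos (2 * A - 2 * x)) := by
        linarith [sin_mul_cos_add_le hx hxA hA hcAB]
    _ < (cos A + 1) * sin B * (cos x + cos (2 * A - 2 * x)) := by gcongr
    _ = _ := by ring

lemma f2_zero_right_pos_iff {a b : ℤ} (hsx : 0 ≤ sin x) (hsB : 0 ≤ sin (2 * π / b))
    (hcB : 0 ≤ cos x + cos (2 * π / b)) (hQ : 0 ≤ cos x + cos (2 * π / a - 2 * x)) :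
    0 < f2 a b x 0 ↔ (cos x + cos (2 * π / b)) * sin x <
      (cos x + cos (2 * π / a - 2 * x)) * sin (2 * π / b) := by
  rw [f2_zero_right, sub_pos, sq_lt_sq₀ (mul_nonneg hcB hsx) (mul_nonneg hQ hsB)]

lemma f2_zero_right_pos_of_pi_div {a b : ℤ} (ha : 3 ≤ a) (hb : 4 ≤ b)
    (h : 0 < f2 a b (π / a) 0) (hx : x ∈ Icc 0 (π / a)) : 0 < f2 a b x 0 := by
  have hπ := pi_pos
  have hA : π / a ≤ π / 3 :=
    div_le_div_of_nonneg_left hπ.le (by norm_num) (by exact_mod_cast ha)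
  have hB : 2 * π / b ≤ π / 2 := by
    have hb' : (4 : ℝ) ≤ b := by exact_mod_cast hb
    calc 2 * π / b ≤ 2 * π / 4 := by gcongr
      _ = π / 2 := by ring
  have hb0 : (0 : ℝ) < b := by exact_mod_cast (by omega : 0 < b)
  have hB0 : 0 ≤ 2 * π / b := by positivity
  have hsB : 0 ≤ sin (2 * π / b) := sin_nonneg_of_nonneg_of_le_pi hB0 (by linarith)
  have hcB : 0 ≤ cos (2 * π / b) :=
    cos_nonneg_of_neg_pi_div_two_le_of_le (by linarith) hB
  have pos_iff : ∀ z ∈ Icc 0 (π / a), 0 < f2 a b z 0 ↔ (cos z + cos (2 * π / b)) * sin z <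
      (cos z + cos (2 * (π / a) - 2 * z)) * sin (2 * π / b) := by
    intro z hz
    have hcz := one_half_le_cos hz.1 (hz.2.trans hA)
    have hQ := cos_add_cos_two_mul_sub_pos hz.1 hz.2 (by linarith)
    rw [← mul_div_assoc] at hQ ⊢
    exact f2_zero_right_pos_iff
      (sin_nonneg_of_nonneg_of_le_pi hz.1 (by linarith [hz.2])) hsB (by linarith) hQ.le
  rw [pos_iff _ ⟨hx.1.trans hx.2, le_rfl⟩, sub_self, cos_zero] at h
  exact (pos_iff x hx).2 (cos_add_cos_mul_sin_lt hx.1 hx.2 hA hB0 hB h)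

lemma sq_cos_add_cos_mul_sin_lt (hx : π / 3 ≤ x) (hx' : x < π / 2) (hB : π / 3 < B)
    (hB' : B ≤ 2 * π / 3) :
    ((cos x + cos B) * sin x) ^ 2 < ((cos x + cos (π - 2 * x)) * sin B) ^ 2 := by
  have hc0 : 0 < cos x := cos_pos_of_mem_Ioo ⟨by linarith, hx'⟩
  have hc : cos x ≤ 1 / 2 := cos_le_one_half hx (by linarith)
  have hC : cos B < 1 / 2 := by
    rw [← cos_pi_div_three]
    exact cos_lt_cos_of_nonneg_of_le_pi (by linarith) (by linarith) hB
  have hC' : -(1 / 2) ≤ cos B := by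
    rw [← cos_pi_div_three, ← cos_pi_sub]
    exact cos_le_cos_of_nonneg_of_le_pi (by linarith) (by linarith) (by linarith)
  have hsB : 3 / 4 ≤ sin B ^ 2 := by nlinarith [sin_sq_add_cos_sq B]
  have hsum : (cos x + cos B) ^ 2 < (cos x + 1 / 2) ^ 2 := by
    apply sq_lt_sq' <;> linarith
  have hfactor : cos x + cos (π - 2 * x) = (1 - cos x) * (1 + 2 * cos x) := by
    rw [cos_pi_sub, cos_two_mul]; ring
  calc ((cos x + cos B) * sin x) ^ 2
      = (cos x + cos B) ^ 2 * ((1 - cos x) * (1 + cos x)) := by rw [mul_pow, sin_sq]; ring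
    _ < (cos x + 1 / 2) ^ 2 * ((1 - cos x) * (1 + cos x)) :=
        mul_lt_mul_of_pos_right hsum (mul_pos (by linarith) (by linarith))
    _ ≤ (cos x + 1 / 2) ^ 2 * ((1 - cos x) * (3 * (1 - cos x))) := by
        gcongr <;> linarith
    _ = ((1 - cos x) * (1 + 2 * cos x)) ^ 2 * (3 / 4) := by ring
    _ ≤ ((1 - cos x) * (1 + 2 * cos x)) ^ 2 * sin B ^ 2 := by gcongr
    _ = _ := by rw [hfactor, ← mul_pow]

lemma f2_two_zero_right_pos {b : ℤ} (hb : 3 ≤ b) (hb' : b ≤ 5) (hx : x ∈ Ico (π / 3) (π / 2)) :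
    0 < f2 2 b x 0 := by
  have hπ := pi_pos
  have hb3 : (3 : ℝ) ≤ b := by exact_mod_cast hb
  have hb5 : (b : ℝ) ≤ 5 := by exact_mod_cast hb'
  have hB : π / 3 < 2 * π / b := by
    rw [div_lt_div_iff₀ (by norm_num) (by linarith)]
    nlinarith
  have hB' : 2 * π / b ≤ 2 * π / 3 := by gcongr
  rw [f2_zero_right, sub_pos, Int.cast_ofNat, mul_div_cancel_left₀ _ (two_ne_zero' ℝ)]
  exact sq_cos_add_cos_mul_sin_lt hx.1 hx.2 hB hB'

end Edge

/-! ### The solution curve for `a = 2` -/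

/-- The value of `cos α₁` as a function of `β₁`, for `a = 2` and `B = 2π/b`, on the curve
`sin β₁ = 2 cos α₁ sin β₂` obtained by eliminating `B₀₀` and `B₁₁` from the edge-condition
system. -/
noncomputable def curveCos (B y : ℝ) : ℝ :=
  sin y / (2 * sin (B - 2 * y))

/-- The function of `β₁` whose zeros are the solutions of the edge-condition system with `a = 2` and
`B = 2π/b`: it is `f₂ / sin² α₁` on the curve `cos α₁ = curveCos B β₁`. The grouping separates a
decreasing first term from an increasing second one. -/
noncomputable def curveResidual (B y : ℝ) : ℝ :=
  (cos y - curveCos B y) / (1 - curveCos B y ^ 2) *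
      ((cos y + 3 * curveCos B y - 4 * curveCos B y ^ 3) * sin (B - 2 * y) ^ 2) -
    (curveCos B y + cos (B - y)) * (curveCos B y + cos (B - 3 * y))

section Curve

variable {B y : ℝ}

lemma sin_sub_two_mul_pos (hB : B ≤ π / 2) (hB0 : 0 < B) (hy : y ∈ Icc 0 (B / 3)) :
    0 < sin (B - 2 * y) :=
  sin_pos_of_pos_of_lt_pi (by linarith [hy.2]) (by linarith [hy.1, pi_pos])

lemma curveCos_zero : curveCos B 0 = 0 := by
  simp [curveCos]

lemma curveCos_div_three (hB : B ≤ π / 2) (hB0 : 0 < B) : curveCos B (B / 3) = 1 / 2 := by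
  have hS := sin_sub_two_mul_pos hB hB0 (right_mem_Icc.2 (by linarith))
  rw [show B - 2 * (B / 3) = B / 3 by ring] at hS
  rw [curveCos, show B - 2 * (B / 3) = B / 3 by ring]
  field_simp

lemma eq_curveCos_iff {c : ℝ} (hS : sin (B - 2 * y) ≠ 0) :
    c = curveCos B y ↔ sin y = 2 * c * sin (B - 2 * y) := by
  rw [curveCos, eq_div_iff (mul_ne_zero two_ne_zero hS), eq_comm, mul_left_comm, mul_assoc]

lemma sin_eq_two_mul_curveCos_mul (hB : B ≤ π / 2) (hB0 : 0 < B) (hy : y ∈ Icc 0 (B / 3)) :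
    sin y = 2 * curveCos B y * sin (B - 2 * y) :=
  (eq_curveCos_iff (sin_sub_two_mul_pos hB hB0 hy).ne').1 rfl

lemma strictMonoOn_curveCos (hB : B ≤ π / 2) (hB0 : 0 < B) :
    StrictMonoOn (curveCos B) (Icc 0 (B / 3)) := by
  intro y hy y' hy' hlt
  have hsin : sin y < sin y' :=
    sin_lt_sin_of_lt_of_le_pi_div_two (by linarith [hy.1]) (by linarith [hy'.2]) hlt
  have hS : sin (B - 2 * y') ≤ sin (B - 2 * y) :=
    sin_le_sin_of_le_of_le_pi_div_two (by linarith [hy'.2]) (by linarith [hy.1]) (by linarith)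
  have hS' := sin_sub_two_mul_pos hB hB0 hy'
  have hsin0 : 0 ≤ sin y := sin_nonneg_of_nonneg_of_le_pi hy.1 (by linarith [hy.2])
  exact div_lt_div₀ hsin (by linarith) (by linarith) (by linarith)

lemma curveCos_mem_Icc (hB : B ≤ π / 2) (hB0 : 0 < B) (hy : y ∈ Icc 0 (B / 3)) :
    curveCos B y ∈ Icc 0 (1 / 2) := by
  have hmono := (strictMonoOn_curveCos hB hB0).monotoneOn
  rw [← curveCos_div_three hB hB0, ← curveCos_zero (B := B)]
  exact ⟨hmono (left_mem_Icc.2 (by linarith)) hy hy.1,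
    hmono hy (right_mem_Icc.2 (by linarith)) hy.2⟩

lemma strictAntiOn_sin_sq_mul_cos_add (hB : B ≤ π / 3) :
    StrictAntiOn (fun y => sin (B - 2 * y) ^ 2 * cos y + 3 / 2 * sin (B - 2 * y) * sin y)
      (Icc 0 (B / 3)) := by
  refine strictAntiOn_of_deriv_neg (convex_Icc _ _) (by fun_prop) fun y hy => ?_
  obtain ⟨h0, h1⟩ : 0 < y ∧ y < B / 3 := by rwa [interior_Icc] at hy
  have hlin : HasDerivAt (fun y : ℝ => B - 2 * y) (-2) y := by
    simpa using ((hasDerivAt_id y).const_mul 2).const_sub B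
  have hderiv := ((hlin.sin.pow 2).mul (hasDerivAt_cos y)).add
    ((hlin.sin.const_mul (3 / 2)).mul (hasDerivAt_sin y))
  have hS : 0 < sin (B - 2 * y) := sin_pos_of_pos_of_lt_pi (by linarith) (by linarith)
  have hC : 1 / 2 ≤ cos (B - 2 * y) := one_half_le_cos (by linarith) (by linarith)
  have hs : 0 < sin y := sin_pos_of_pos_of_lt_pi h0 (by linarith)
  have hc : 0 < cos y := cos_pos_of_mem_Ioo ⟨by linarith, by linarith⟩
  calc deriv _ y = -(4 * (sin (B - 2 * y) * cos y) * (cos (B - 2 * y) - 3 / 8) +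
        sin (B - 2 * y) ^ 2 * sin y + 3 * cos (B - 2 * y) * sin y) := by
        refine hderiv.deriv.trans ?_
        simp only [Nat.cast_ofNat, Pi.pow_apply]
        ring
    _ < 0 := by
        have : 0 < cos (B - 2 * y) - 3 / 8 := by linarith
        have : 0 < cos (B - 2 * y) := by linarith
        rw [neg_lt_zero]
        positivity

/- Substituting `sin y = 2 c sin (B - 2 y)`, with `c = curveCos B y`, removes the higher powers
of `c`. -/
lemma strictAntiOn_cos_add_mul_sin_sq (hB : B ≤ π / 3) (hB0 : 0 < B) :
    StrictAntiOn (fun y => (cos y + 3 * curveCos B y - 4 * curveCos B y ^ 3) *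
      sin (B - 2 * y) ^ 2) (Icc 0 (B / 3)) := by
  have hB' : B ≤ π / 2 := by linarith
  have rewritten : ∀ y ∈ Icc 0 (B / 3),
      (cos y + 3 * curveCos B y - 4 * curveCos B y ^ 3) * sin (B - 2 * y) ^ 2 =
        (sin (B - 2 * y) ^ 2 * cos y + 3 / 2 * sin (B - 2 * y) * sin y) -
          curveCos B y * sin y ^ 2 := by
    intro y hy
    rw [sin_eq_two_mul_curveCos_mul hB' hB0 hy]
    ring
  intro y hy y' hy' hlt
  have hsub : curveCos B y * sin y ^ 2 ≤ curveCos B y' * sin y' ^ 2 := by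
    have hsin0 : 0 ≤ sin y := sin_nonneg_of_nonneg_of_le_pi hy.1 (by linarith [hy.2])
    have hsin : sin y ≤ sin y' :=
      sin_le_sin_of_le_of_le_pi_div_two (by linarith [hy.1]) (by linarith [hy'.2]) hlt.le
    exact mul_le_mul (strictMonoOn_curveCos hB' hB0 hy hy' hlt).le (by gcongr) (sq_nonneg _)
      (curveCos_mem_Icc hB' hB0 hy').1
  have hmain := strictAntiOn_sin_sq_mul_cos_add hB hy hy' hlt
  beta_reduce at hmain ⊢
  rw [rewritten y hy, rewritten y' hy']
  linarith

lemma monotoneOn_curveCos_add_cos_mul (hB : B ≤ π / 2) (hB0 : 0 < B) :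
    MonotoneOn (fun y => (curveCos B y + cos (B - y)) * (curveCos B y + cos (B - 3 * y)))
      (Icc 0 (B / 3)) := by
  have hα := (strictMonoOn_curveCos hB hB0).monotoneOn
  have hcos (k : ℝ) (hk : 0 ≤ k) (hk' : k ≤ 3) :
      MonotoneOn (fun y => cos (B - k * y)) (Icc 0 (B / 3)) := fun y hy y' hy' hle =>
    cos_le_cos_of_nonneg_of_le_pi (by nlinarith [hy'.1, hy'.2]) (by nlinarith [hy.1]) (by gcongr)
  have hpos : ∀ k, 0 ≤ k → k ≤ 3 → ∀ y ∈ Icc 0 (B / 3), 0 ≤ curveCos B y + cos (B - k * y) :=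
    fun k hk hk' y hy => add_nonneg (curveCos_mem_Icc hB hB0 hy).1
      (cos_nonneg_of_neg_pi_div_two_le_of_le (by nlinarith [hy.1, hy.2]) (by nlinarith [hy.1]))
  simpa only [one_mul, Pi.mul_def] using (hα.add (hcos 1 zero_le_one (by norm_num))).mul
    (hα.add (hcos 3 (by norm_num) le_rfl)) (hpos 1 zero_le_one (by norm_num))
    (hpos 3 (by norm_num) le_rfl)

lemma strictAntiOn_curveResidual (hB : B ≤ π / 3) (hB0 : 0 < B) :
    StrictAntiOn (curveResidual B) (Icc 0 (B / 3)) := by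
  have hB' : B ≤ π / 2 := by linarith
  intro y hy y' hy' hlt
  have hα := curveCos_mem_Icc hB' hB0 hy
  have hα' := curveCos_mem_Icc hB' hB0 hy'
  have hcos : 1 / 2 < cos y := one_half_lt_cos hy.1 (by linarith [hy.2])
  have hcos' : 1 / 2 < cos y' := one_half_lt_cos hy'.1 (by linarith [hy'.2])
  have quotient_le : (cos y' - curveCos B y') / (1 - curveCos B y' ^ 2) ≤
      (cos y - curveCos B y) / (1 - curveCos B y ^ 2) :=
    sub_div_one_sub_sq_le hα.1 (strictMonoOn_curveCos hB' hB0 hy hy' hlt).le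
      (by linarith [hα'.2]) (cos_le_cos_of_nonneg_of_le_pi hy.1 (by linarith [hy'.2]) hlt.le)
      (cos_le_one y)
  have quotient_pos : 0 < (cos y - curveCos B y) / (1 - curveCos B y ^ 2) :=
    div_pos (by linarith [hα.2]) (by nlinarith [hα.1, hα.2])
  have factor_nonneg :
      0 ≤ (cos y' + 3 * curveCos B y' - 4 * curveCos B y' ^ 3) * sin (B - 2 * y') ^ 2 :=
    mul_nonneg (add_three_mul_sub_pos (by linarith) hα').le (sq_nonneg _)
  have decreasing_part := mul_lt_mul' quotient_le
    (strictAntiOn_cos_add_mul_sin_sq hB hB0 hy hy' hlt) factor_nonneg quotient_pos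
  have increasing_part := monotoneOn_curveCos_add_cos_mul hB' hB0 hy hy' hlt.le
  exact (sub_lt_sub_right decreasing_part _).trans_le (sub_le_sub_left increasing_part _)

lemma continuousOn_curveResidual (hB : B ≤ π / 2) (hB0 : 0 < B) :
    ContinuousOn (curveResidual B) (Icc 0 (B / 3)) := by
  have hα : ContinuousOn (curveCos B) (Icc 0 (B / 3)) := by
    unfold curveCos
    exact ContinuousOn.div (by fun_prop) (by fun_prop)
      fun y hy => (mul_pos two_pos (sin_sub_two_mul_pos hB hB0 hy)).ne'
  have hden : ∀ y ∈ Icc 0 (B / 3), 1 - curveCos B y ^ 2 ≠ 0 := fun y hy => by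
    obtain ⟨h0, h1⟩ := curveCos_mem_Icc hB hB0 hy
    nlinarith
  unfold curveResidual
  fun_prop (disch := assumption)

lemma curveResidual_div_three_nonpos (hB : B ≤ π / 2) (hB0 : 0 < B) :
    curveResidual B (B / 3) ≤ 0 := by
  have hC : 1 / 2 ≤ cos (B / 3) := one_half_le_cos (by linarith) (by linarith)
  have hC1 := cos_le_one (B / 3)
  have factored : curveResidual B (B / 3) = (cos (B / 3) - 1 / 2) *
      (4 / 3 * ((1 + cos (B / 3)) * (1 - cos (B / 3) ^ 2)) - 3 * (cos (B / 3) + 1 / 2)) := by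
    rw [curveResidual, curveCos_div_three hB hB0, show B - 2 * (B / 3) = B / 3 by ring,
      show B - B / 3 = 2 * (B / 3) by ring, show B - 3 * (B / 3) = 0 by ring, cos_zero,
      cos_two_mul, sin_sq]
    ring
  have : (1 + cos (B / 3)) * (1 - cos (B / 3) ^ 2) ≤ 2 * 1 :=
    mul_le_mul (by linarith) (by nlinarith) (by nlinarith) (by norm_num)
  rw [factored]
  exact mul_nonpos_of_nonneg_of_nonpos (by linarith) (by linarith)

lemma existsUnique_curveResidual_eq_zero (hB : B ≤ π / 3) (hB0 : 0 < B)
    (h : 0 ≤ curveResidual B 0) : ∃! y, y ∈ Icc 0 (B / 3) ∧ curveResidual B y = 0 := by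
  have hB' : B ≤ π / 2 := by linarith [pi_pos]
  obtain ⟨y, hy, hy0⟩ := intermediate_value_Icc' (by linarith) (continuousOn_curveResidual hB' hB0)
    ⟨curveResidual_div_three_nonpos hB' hB0, h⟩
  exact ⟨y, ⟨hy, hy0⟩, fun z hz =>
    (strictAntiOn_curveResidual hB hB0).injOn hz.1 hy (hz.2.trans hy0.symm)⟩

end Curve

/-! ### The edge-condition system for `a = 2` -/

section Two

variable {b : ℤ} {x y : ℝ}

lemma B00_two_eq_neg_mul (x y : ℝ) :
    B00 2 x y = -((cos y - cos x) * (cos y + 3 * cos x - 4 * cos x ^ 3)) := by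
  rw [B00_eq_neg_mul, Int.cast_ofNat, mul_div_cancel_left₀ _ (two_ne_zero' ℝ), cos_pi_sub,
    cos_pi_sub, cos_three_mul]
  ring

lemma B00_two_neg (hx : x ∈ Icc (π / 3) (π / 2)) (hy : y ∈ Ico 0 (π / 3)) : B00 2 x y < 0 := by
  have hπ := pi_pos
  have hcx : cos x ∈ Icc (0 : ℝ) (1 / 2) :=
    ⟨cos_nonneg_of_neg_pi_div_two_le_of_le (by linarith [hx.1]) hx.2,
      cos_le_one_half hx.1 (by linarith [hx.2])⟩
  have hcy := one_half_lt_cos hy.1 hy.2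
  rw [B00_two_eq_neg_mul, neg_lt_zero]
  exact mul_pos (by linarith [hcx.2]) (add_three_mul_sub_pos (by linarith) hcx)

lemma f2_two_eq_mul_curveResidual (hx : sin x ≠ 0) (hxy : cos x = curveCos (2 * π / b) y) :
    f2 2 b x y = sin x ^ 2 * curveResidual (2 * π / b) y := by
  have hne : 1 - cos x ^ 2 ≠ 0 := by
    rw [← sin_sq]
    exact pow_ne_zero 2 hx
  rw [f2, B11_eq_B00, B00_eq_neg_mul, B00_two_eq_neg_mul, curveResidual, ← hxy, sin_sq x]
  field_simp
  ring

lemma f1_two_eq_zero_iff (hx : x ∈ Icc (π / 3) (π / 2)) (hy : y ∈ Ico 0 (π / 3))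
    (hS : 0 ≤ sin (2 * π / b - 2 * y)) (hf2 : f2 2 b x y = 0) :
    f1 2 b x y = 0 ↔ sin y = 2 * cos x * sin (2 * π / b - 2 * y) := by
  have hπ := pi_pos
  have hsx : 0 < sin x := sin_pos_of_pos_of_lt_pi (by linarith [hx.1]) (by linarith [hx.2])
  have hcx : 0 ≤ cos x := cos_nonneg_of_neg_pi_div_two_le_of_le (by linarith [hx.1]) hx.2
  have hsy : 0 ≤ sin y := sin_nonneg_of_nonneg_of_le_pi hy.1 (by linarith [hy.2])
  have elimination : f1 2 b x y * sin x ^ 2 = B00 2 x y * sin x ^ 2 *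
      (sin y ^ 2 - (2 * cos x * sin (2 * π / b - 2 * y)) ^ 2) := by
    have h := f1_mul_sin_sq_add_f2_mul_sin_sq 2 b x y
    rw [hf2, Int.cast_ofNat, mul_div_cancel_left₀ _ (two_ne_zero' ℝ), sin_pi_sub,
      sin_two_mul] at h
    linear_combination h
  rw [← mul_eq_zero_iff_right (pow_ne_zero 2 hsx.ne'), elimination, mul_eq_zero_iff_left
    (mul_ne_zero (B00_two_neg hx hy).ne (pow_ne_zero 2 hsx.ne')), sub_eq_zero,
    pow_left_inj₀ hsy (by positivity) two_ne_zero]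

lemma le_div_three_of_sin_eq {B : ℝ} (hB : B ≤ π / 2) (hx : x ∈ Icc (π / 3) (π / 2))
    (hy : y ∈ Icc 0 (B / 2)) (h : sin y = 2 * cos x * sin (B - 2 * y)) : y ≤ B / 3 := by
  have hπ := pi_pos
  have hS : 0 ≤ sin (B - 2 * y) :=
    sin_nonneg_of_nonneg_of_le_pi (by linarith [hy.2]) (by linarith [hy.1])
  have hcx : cos x ≤ 1 / 2 := cos_le_one_half hx.1 (by linarith [hx.2])
  have hle : sin y ≤ sin (B - 2 * y) := h.trans_le (by nlinarith)
  rw [strictMonoOn_sin.le_iff_le ⟨by linarith [hy.1], by linarith [hy.1, hy.2]⟩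
    ⟨by linarith [hy.2], by linarith [hy.1]⟩] at hle
  linarith

lemma two_pi_div_mem_Ioc (hb : 6 ≤ b) : 2 * π / b ∈ Ioc 0 (π / 3) := by
  have hb' : (6 : ℝ) ≤ b := by exact_mod_cast hb
  refine ⟨by positivity, ?_⟩
  calc 2 * π / b ≤ 2 * π / 6 := by gcongr
    _ = π / 3 := by ring

lemma mem_Dom_two_and_f1_f2_eq_zero_iff (hb : 6 ≤ b) :
    ((x, y) ∈ Dom 2 b ∧ f1 2 b x y = 0 ∧ f2 2 b x y = 0) ↔
      (y ∈ Icc 0 (2 * π / b / 3) ∧ curveResidual (2 * π / b) y = 0) ∧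
        x = arccos (curveCos (2 * π / b) y) := by
  obtain ⟨hB0, hB⟩ := two_pi_div_mem_Ioc hb
  have hB' : 2 * π / b ≤ π / 2 := by linarith
  have hhalf : π / b = 2 * π / b / 2 := by ring
  have hsin : ∀ z ∈ Icc (π / 3) (π / 2), sin z ≠ 0 := fun z hz =>
    (sin_pos_of_pos_of_lt_pi (by linarith [hz.1]) (by linarith [hz.2])).ne'
  rw [Dom, alphaI, if_pos rfl, prodMk_mem_set_prod_eq, hhalf]
  constructor
  · rintro ⟨⟨hx, hy⟩, hf1, hf2⟩
    have hS : 0 ≤ sin (2 * π / b - 2 * y) :=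
      sin_nonneg_of_nonneg_of_le_pi (by linarith [hy.2]) (by linarith [hy.1])
    have hcurve := (f1_two_eq_zero_iff hx ⟨hy.1, by linarith [hy.2]⟩ hS hf2).1 hf1
    have hy3 : y ∈ Icc 0 (2 * π / b / 3) := ⟨hy.1, le_div_three_of_sin_eq hB' hx hy hcurve⟩
    have hcos := (eq_curveCos_iff (sin_sub_two_mul_pos hB' hB0 hy3).ne').2 hcurve
    rw [f2_two_eq_mul_curveResidual (hsin x hx) hcos] at hf2
    refine ⟨⟨hy3, (mul_eq_zero_iff_left (pow_ne_zero 2 (hsin x hx))).1 hf2⟩, ?_⟩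
    rw [← hcos, arccos_cos (by linarith [hx.1]) (by linarith [hx.2])]
  · rintro ⟨⟨hy, hres⟩, rfl⟩
    have hα := curveCos_mem_Icc hB' hB0 hy
    have hx := arccos_mem_Icc_pi_div_three_pi_div_two hα
    have hcos : cos (arccos (curveCos (2 * π / b) y)) = curveCos (2 * π / b) y :=
      cos_arccos (by linarith [hα.1]) (by linarith [hα.2])
    have hS := sin_sub_two_mul_pos hB' hB0 hy
    have hf2 : f2 2 b (arccos (curveCos (2 * π / b) y)) y = 0 := by
      rw [f2_two_eq_mul_curveResidual (hsin _ hx) hcos, hres, mul_zero]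
    exact ⟨⟨hx, hy.1, by linarith [hy.2]⟩, (f1_two_eq_zero_iff hx ⟨hy.1, by linarith [hy.2]⟩
      hS.le hf2).2 ((eq_curveCos_iff hS.ne').1 hcos), hf2⟩

lemma existsUnique_mem_Dom_two (hb : 6 ≤ b) (h : 0 ≤ f2 2 b (π / 2) 0) :
    ∃! p : ℝ × ℝ, p ∈ Dom 2 b ∧ f1 2 b p.1 p.2 = 0 ∧ f2 2 b p.1 p.2 = 0 := by
  obtain ⟨hB0, hB⟩ := two_pi_div_mem_Ioc hb
  rw [f2_two_eq_mul_curveResidual (by simp) (by rw [cos_pi_div_two, curveCos_zero]), sin_pi_div_two,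
    one_pow, one_mul] at h
  obtain ⟨y, hy, y_unique⟩ := existsUnique_curveResidual_eq_zero hB hB0 h
  refine ⟨(arccos (curveCos (2 * π / b) y), y),
    (mem_Dom_two_and_f1_f2_eq_zero_iff hb).2 ⟨hy, rfl⟩, ?_⟩
  rintro ⟨x', y'⟩ hsol
  obtain ⟨hy', rfl⟩ := (mem_Dom_two_and_f1_f2_eq_zero_iff hb).1 hsol
  rw [y_unique y' hy']

end Two

theorem stmt11 (a b : ℤ) (ha : 2 ≤ a) (hab : a < b)
    (h : f2 a b (π / (a : ℝ)) 0 > 0)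
    (hex : ∃ α₁ ∈ alphaI a, α₁ < π / (a : ℝ) ∧ f2 a b α₁ 0 ≤ 0) :
    ∃! p : ℝ × ℝ, p ∈ Dom a b ∧ f1 a b p.1 p.2 = 0 ∧ f2 a b p.1 p.2 = 0 := by
  obtain ⟨x, hx, hxa, hle⟩ := hex
  rcases ha.eq_or_lt with rfl | ha3
  · rw [Int.cast_ofNat] at h hxa
    rcases le_or_gt 6 b with hb | hb
    · exact existsUnique_mem_Dom_two hb h.le
    · rw [alphaI, if_pos rfl] at hx
      exact absurd (f2_two_zero_right_pos hab (by omega) ⟨hx.1, hxa⟩) hle.not_gt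
  · exact absurd (f2_zero_right_pos_of_pi_div ha3 (by omega) h (alphaI_subset_Icc a hx))
      hle.not_gt
end

section
/- For every integer a ≥ 6, the criterion fails at b = 2a + 1; that is, (1 + cos(π/a))·sin(2π/(2a+1)) < (cos(π/a) + cos(2π/(2a+1)))·sin(π/a). Consequently, for a ≥ 6 the largest integer b for which the criterion holds is b_max = 2a. -/
open Real

/-!
With `h = π / (2a)` and `y = 2π / b`, the two sides of the criterion differ by
`2 cos h (sin (y - h) - sin h cos 2h)`, which decreases in `b ≥ 4`, so only `b = 2a` and
`b = 2a + 1` need inspection. For `b = 2a` we have `y = 2h`, and the criterion reads `cos 2h < 1`.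
For `b = 2a + 1` we have `y = 2h - d` with `d = 2h² / (π + h)`. Since `sin` is concave on `[0, π]`,
`sin (h - d) < sin h - d cos h`, whereas `sin h cos 2h = sin h - 2 sin³ h ≥ sin h - 2h³`; so the
criterion fails as soon as `h (π + h) ≤ cos h`, which holds for `h ≤ π / 12`, that is, `a ≥ 6`.
-/

theorem one_add_cos_mul_sin_sub_cos_add_cos_mul_sin (h y : ℝ) :
    (1 + cos (2 * h)) * sin y - (cos (2 * h) + cos y) * sin (2 * h) =
      2 * cos h * (sin (y - h) - sin h * cos (2 * h)) := by
  rw [sin_sub, sin_two_mul, cos_two_mul]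
  ring

theorem sub_mul_cos_lt_sin_sub_sin {x y : ℝ} (hx : 0 ≤ x) (hxy : x < y) (hy : y ≤ π) :
    (y - x) * cos y < sin y - sin x := by
  have hslope : cos y < slope sin x y :=
    strictConcaveOn_sin_Icc.lt_slope_of_hasDerivAt ⟨hx, hxy.le.trans hy⟩
      ⟨hx.trans hxy.le, hy⟩ hxy (hasDerivAt_sin y)
  rwa [slope_def_field, lt_div_iff₀' (sub_pos.2 hxy)] at hslope

theorem sin_sub_two_mul_pow_three_le_sin_mul_cos_two_mul {h : ℝ} (h0 : 0 ≤ h) (hπ : h ≤ π) :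
    sin h - 2 * h ^ 3 ≤ sin h * cos (2 * h) := by
  have hcube : sin h ^ 3 ≤ h ^ 3 :=
    pow_le_pow_left₀ (sin_nonneg_of_nonneg_of_le_pi h0 hπ) (sin_le h0) 3
  calc sin h - 2 * h ^ 3 ≤ sin h - 2 * sin h ^ 3 := by linarith
    _ = sin h * cos (2 * h) := by rw [cos_two_mul, cos_sq']; ring

theorem mul_pi_add_self_le_cos {h : ℝ} (h0 : 0 ≤ h) (h1 : h ≤ π / 12) : h * (π + h) ≤ cos h := by
  have hπ : π < 3.15 := pi_lt_d2
  have hh : h ≤ 0.2625 := by linarith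
  calc h * (π + h) ≤ 0.2625 * (3.15 + 0.2625) := by gcongr
    _ ≤ 1 - 0.2625 ^ 2 / 2 := by norm_num
    _ ≤ 1 - h ^ 2 / 2 := by gcongr
    _ ≤ cos h := one_sub_sq_div_two_le_cos

theorem sin_sub_lt_sin_mul_cos_two_mul {h : ℝ} (h0 : 0 < h) (h1 : h ≤ π / 12) :
    sin (h - 2 * h ^ 2 / (π + h)) < sin h * cos (2 * h) := by
  have hd_pos : 0 < 2 * h ^ 2 / (π + h) := by positivity
  have hd_le : 2 * h ^ 2 / (π + h) ≤ h := by
    rw [div_le_iff₀ (by positivity)]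
    nlinarith
  have hd_mul_cos : 2 * h ^ 3 ≤ 2 * h ^ 2 / (π + h) * cos h :=
    calc 2 * h ^ 3 = 2 * h ^ 2 / (π + h) * (h * (π + h)) := by field_simp
      _ ≤ 2 * h ^ 2 / (π + h) * cos h := by gcongr; exact mul_pi_add_self_le_cos h0.le h1
  have hconcave := sub_mul_cos_lt_sin_sub_sin (sub_nonneg.2 hd_le) (sub_lt_self h hd_pos)
    (by linarith)
  rw [sub_sub_cancel] at hconcave
  calc sin (h - 2 * h ^ 2 / (π + h)) < sin h - 2 * h ^ 3 := by linarith
    _ ≤ sin h * cos (2 * h) :=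
      sin_sub_two_mul_pow_three_le_sin_mul_cos_two_mul h0.le (by linarith)

/-- The left side of the criterion for the parameters `a`, `b` minus its right side, so that the
criterion holds when the gap is positive. The parameters are real, for monotonicity in `b`. -/
noncomputable def criterionGap (a b : ℝ) : ℝ :=
  (1 + cos (π / a)) * sin (2 * π / b) - (cos (π / a) + cos (2 * π / b)) * sin (π / a)

theorem criterionGap_eq (a b : ℝ) :
    criterionGap a b = 2 * cos (π / (2 * a)) *
      (sin (2 * π / b - π / (2 * a)) - sin (π / (2 * a)) * cos (π / a)) := by
  have hdouble : π / a = 2 * (π / (2 * a)) := by ring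
  rw [criterionGap, hdouble, one_add_cos_mul_sin_sub_cos_add_cos_mul_sin]

theorem pi_div_two_mul_mem_Ioo {a : ℝ} (ha : 1 < a) : π / (2 * a) ∈ Set.Ioo 0 (π / 2) :=
  ⟨by positivity, by gcongr; linarith⟩

theorem cos_pi_div_two_mul_pos {a : ℝ} (ha : 1 < a) : 0 < cos (π / (2 * a)) := by
  have hmem := pi_div_two_mul_mem_Ioo ha
  exact cos_pos_of_mem_Ioo ⟨by linarith [hmem.1, pi_pos], hmem.2⟩

theorem criterionGap_strictAntiOn {a : ℝ} (ha : 1 < a) :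
    StrictAntiOn (criterionGap a) (Set.Ici 4) := by
  intro b hb c hc hbc
  have hcos := cos_pi_div_two_mul_pos ha
  obtain ⟨h_pos, h_lt⟩ := pi_div_two_mul_mem_Ioo ha
  have hb4 : (4 : ℝ) ≤ b := hb
  have hc4 : (4 : ℝ) ≤ c := hc
  have hyb : 2 * π / b ≤ 2 * π / 4 := by gcongr
  have hyc : 0 < 2 * π / c := by positivity
  have hy : 2 * π / c < 2 * π / b := by gcongr
  have hsin : sin (2 * π / c - π / (2 * a)) < sin (2 * π / b - π / (2 * a)) :=
    sin_lt_sin_of_lt_of_le_pi_div_two (by linarith) (by linarith) (by linarith)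
  rw [criterionGap_eq, criterionGap_eq]
  gcongr

theorem criterionGap_two_mul_pos {a : ℝ} (ha : 1 < a) : 0 < criterionGap a (2 * a) := by
  have hx_pos : 0 < π / a := by positivity
  have hx_lt : π / a < π := div_lt_self pi_pos ha
  have hcos : cos (π / a) < 1 := by
    simpa only [cos_zero] using cos_lt_cos_of_nonneg_of_le_pi le_rfl hx_lt.le hx_pos
  have hgap : criterionGap a (2 * a) = (1 - cos (π / a)) * sin (π / a) := by
    rw [criterionGap, mul_div_mul_left π a two_ne_zero]
    ring
  rw [hgap]
  exact mul_pos (sub_pos.2 hcos) (sin_pos_of_pos_of_lt_pi hx_pos hx_lt)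

theorem criterionGap_two_mul_add_one_neg {a : ℝ} (ha : 6 ≤ a) :
    criterionGap a (2 * a + 1) < 0 := by
  set h := π / (2 * a) with hh
  have h_pos : 0 < h := by positivity
  have h_le : h ≤ π / 12 := by rw [hh]; gcongr; linarith
  have hdouble : π / a = 2 * h := by rw [hh]; ring
  have harg : 2 * π / (2 * a + 1) - h = h - 2 * h ^ 2 / (π + h) := by rw [hh]; field_simp; ring
  rw [criterionGap_eq, ← hh, harg, hdouble]
  exact mul_neg_of_pos_of_neg (mul_pos two_pos (cos_pi_div_two_mul_pos (by linarith)))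
    (sub_neg.2 (sin_sub_lt_sin_mul_cos_two_mul h_pos h_le))

theorem stmt16_general (a : ℝ) (ha : 6 ≤ a) :
    (∀ b, 2 * a + 1 ≤ b →
      (1 + cos (π / a)) * sin (2 * π / b) < (cos (π / a) + cos (2 * π / b)) * sin (π / a)) ∧
    ∀ b, 4 ≤ b → b ≤ 2 * a →
      (1 + cos (π / a)) * sin (2 * π / b) > (cos (π / a) + cos (2 * π / b)) * sin (π / a) := by
  have hanti := (criterionGap_strictAntiOn (a := a) (by linarith)).antitoneOn
  refine ⟨fun b hb => sub_neg.1 ?_, fun b hb4 hb => sub_pos.1 ?_⟩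
  · calc criterionGap a b ≤ criterionGap a (2 * a + 1) :=
          hanti (Set.mem_Ici.2 (by linarith)) (Set.mem_Ici.2 (by linarith)) hb
      _ < 0 := criterionGap_two_mul_add_one_neg ha
  · calc 0 < criterionGap a (2 * a) := criterionGap_two_mul_pos (by linarith)
      _ ≤ criterionGap a b := hanti hb4 (Set.mem_Ici.2 (by linarith)) hb

/-- For `a ≥ 6` the criterion fails at `b = 2a + 1`; consequently the largest integer `b > a`
for which the criterion holds is `b_max = 2a`. -/
theorem stmt16 (a : ℤ) (ha : 6 ≤ a) :
    (1 + cos (π / (a : ℝ))) * sin (2 * π / ((2 * a + 1 : ℤ) : ℝ)) <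
      (cos (π / (a : ℝ)) + cos (2 * π / ((2 * a + 1 : ℤ) : ℝ))) * sin (π / (a : ℝ)) ∧
    IsGreatest {b : ℤ | a < b ∧
      (1 + cos (π / (a : ℝ))) * sin (2 * π / (b : ℝ)) >
        (cos (π / (a : ℝ)) + cos (2 * π / (b : ℝ))) * sin (π / (a : ℝ))} (2 * a) := by
  obtain ⟨hfails, hholds⟩ := stmt16_general a (mod_cast ha)
  exact ⟨hfails _ (by push_cast; rfl), ⟨by lia, hholds _ (mod_cast (by lia)) (by push_cast; rfl)⟩,
    fun b hb => not_lt.1 fun hlt => hb.2.asymm (hfails b (mod_cast hlt))⟩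
end

section
/- Let a = 2 and let b ≥ 4 be an integer. Then for every β₁ ∈ [0, π/b], one has f₁(π/3, β₁) > 0. Moreover, for every β₁ ∈ [0, π/b] one has f₁(0, β₁) = −(1 − cos β₁)²·sin²β₁ ≤ 0 and f₁(π/2, β₁) = −cos²β₁·sin²β₁ ≤ 0. -/
open Real

/- At `α₁ = π / 3` the function `f₁` is `3/16` plus a multiple of `sin² β₁`, nonnegative as soon as
`cos 2β₁ ≥ 0`, and positive multiples of `cos² β₂ - sin² 2β₁` and `cos β₁ cos β₂`. For `b ≥ 4` the
angle `2β₁` lies in `[0, π/2]` and `0 ≤ β₂ ≤ π/2 - 2β₁`, so `cos β₂ ≥ sin 2β₁ ≥ 0` and no term is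
negative. The constant `3/16` is the value at `b = 4`, `β₁ = 0`. -/

theorem f1_two (b : ℤ) (α β : ℝ) :
    f1 2 b α β =
      (1 - cos α ^ 2 - cos (2 * α) ^ 2 - cos β ^ 2 + 2 * cos α * cos (2 * α) * cos β) * sin β ^ 2
        - B11 b α β * sin (2 * α) ^ 2 := by
  have hπ : 2 * π / ((2 : ℤ) : ℝ) = π := by push_cast; ring
  rw [f1, B00, hπ, cos_pi_sub, sin_pi_sub]
  ring

theorem f1_two_zero (b : ℤ) (β : ℝ) : f1 2 b 0 β = -(1 - cos β) ^ 2 * sin β ^ 2 := by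
  rw [f1_two, mul_zero, cos_zero, sin_zero]
  ring

theorem f1_two_pi_div_two (b : ℤ) (β : ℝ) : f1 2 b (π / 2) β = -cos β ^ 2 * sin β ^ 2 := by
  rw [f1_two, mul_div_cancel₀ π two_ne_zero, cos_pi_div_two, cos_pi, sin_pi]
  ring

theorem f1_two_pi_div_three (b : ℤ) (β : ℝ) :
    f1 2 b (π / 3) β =
      3 / 16 + (1 / 4 + (1 - cos β) / 2 + cos (2 * β)) * sin β ^ 2
        + 3 / 4 * (cos (2 * π / b - 2 * β) ^ 2 - sin (2 * β) ^ 2)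
        + 3 / 4 * (cos β * cos (2 * π / b - 2 * β)) := by
  have hcos : cos (2 * (π / 3)) = -1 / 2 := by
    rw [cos_two_mul, cos_pi_div_three]
    norm_num
  rw [f1_two, B11, sin_sq (2 * (π / 3)), hcos, cos_pi_div_three, sin_two_mul, cos_two_mul, mul_pow,
    mul_pow, sin_sq]
  ring

theorem sin_le_cos_sub {x θ : ℝ} (hx : -(π / 2) ≤ x) (hxθ : x ≤ θ) (hθ : θ ≤ π / 2) :
    sin x ≤ cos (θ - x) := by
  rw [← cos_pi_div_two_sub]
  exact cos_le_cos_of_nonneg_of_le_pi (sub_nonneg.2 hxθ) (by linarith) (by linarith)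

theorem three_div_sixteen_le_f1_two_pi_div_three {b : ℤ} (hb : 4 ≤ b) {β : ℝ}
    (hβ : β ∈ Set.Icc 0 (π / (b : ℝ))) : 3 / 16 ≤ f1 2 b (π / 3) β := by
  obtain ⟨hβ₀, hβb⟩ := hβ
  have hb' : π / (b : ℝ) ≤ π / 4 := by
    gcongr
    exact_mod_cast hb
  have h2πb : 2 * π / (b : ℝ) = 2 * (π / b) := mul_div_assoc ..
  have hcos : 0 ≤ cos β := cos_nonneg_of_mem_Icc ⟨by linarith, by linarith⟩
  have hcos2 : 0 ≤ cos (2 * β) := cos_nonneg_of_mem_Icc ⟨by linarith, by linarith⟩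
  have hsin2 : 0 ≤ sin (2 * β) := sin_nonneg_of_nonneg_of_le_pi (by linarith) (by linarith)
  have hle : sin (2 * β) ≤ cos (2 * π / b - 2 * β) :=
    sin_le_cos_sub (by linarith) (by linarith) (by linarith)
  have hsq : 0 ≤ cos (2 * π / b - 2 * β) ^ 2 - sin (2 * β) ^ 2 :=
    sub_nonneg.2 (pow_le_pow_left₀ hsin2 hle 2)
  have hmul : 0 ≤ cos β * cos (2 * π / b - 2 * β) := mul_nonneg hcos (hsin2.trans hle)
  have hcoeff : 0 ≤ 1 / 4 + (1 - cos β) / 2 + cos (2 * β) := by linarith [cos_le_one β]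
  rw [f1_two_pi_div_three]
  linarith [mul_nonneg hcoeff (sq_nonneg (sin β))]

theorem stmt17 (b : ℤ) (hb : 4 ≤ b) :
    ∀ β₁ ∈ Set.Icc 0 (π / (b : ℝ)),
      f1 2 b (π / 3) β₁ > 0 ∧
      f1 2 b 0 β₁ = -(1 - cos β₁) ^ 2 * sin β₁ ^ 2 ∧ f1 2 b 0 β₁ ≤ 0 ∧
      f1 2 b (π / 2) β₁ = -cos β₁ ^ 2 * sin β₁ ^ 2 ∧ f1 2 b (π / 2) β₁ ≤ 0 := by
  intro β₁ hβ₁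
  have hpos : 0 < f1 2 b (π / 3) β₁ :=
    lt_of_lt_of_le (by norm_num) (three_div_sixteen_le_f1_two_pi_div_three hb hβ₁)
  refine ⟨hpos, f1_two_zero b β₁, ?_, f1_two_pi_div_two b β₁, ?_⟩
  · rw [f1_two_zero, neg_mul, neg_nonpos]
    positivity
  · rw [f1_two_pi_div_two, neg_mul, neg_nonpos]
    positivity
end

section
/- Let a, b be integers with b > a ≥ 3. Then for every β₁ ∈ [0, π/b], one has f₁(0, β₁) = −(cos(2π/a) + cos β₁)²·sin²β₁ + (cos β₁ + cos β₂)²·sin²(2π/a) > 0, where β₂ = 2π/b − 2β₁. Moreover, f₁(π/a, β₁) = −(cos(π/a) + cos β₁)²·sin²β₁ ≤ 0 for every β₁ ∈ [0, π/b], and f₁(α₁, 0) = (cos α₁ + cos(2π/b))²·sin²α₂ ≥ 0 for every α₁ ∈ [0, π/a]. -/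
open Real

section Trigonometry

variable {x y β : ℝ}

lemma cos_add_cos_nonneg (hx : 0 ≤ x) (hβ : 0 ≤ β) (hxβ : x + β ≤ π) :
    0 ≤ cos x + cos β := by
  have h : cos (π - β) ≤ cos x :=
    cos_le_cos_of_nonneg_of_le_pi hx (by linarith) (by linarith)
  rw [cos_pi_sub] at h
  linarith

lemma cos_add_cos_mul_sin_sub_cos_add_cos_mul_sin (x β : ℝ) :
    (cos β + cos (x - 2 * β)) * sin x - (cos x + cos β) * sin β =
      sin (x - β) * (1 + cos (x - β)) := by
  rw [cos_sub x (2 * β), sin_sub, cos_sub, sin_two_mul, cos_two_mul]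
  linear_combination cos x * sin x * sin_sq_add_cos_sq β + cos β * sin β * sin_sq_add_cos_sq x

-- For fixed `x` the right-hand side is smallest at `y = x`, where the difference of the two sides
-- factors as `sin (x - β) * (1 + cos (x - β))`.
lemma cos_add_cos_mul_sin_lt_s18 (hβ : 0 ≤ β) (hβy : 2 * β ≤ y) (hyx : y ≤ x) (hx₀ : 0 < x)
    (hxπ : x < π) :
    (cos x + cos β) * sin β < (cos β + cos (y - 2 * β)) * sin x := by
  have hcos : cos (x - 2 * β) ≤ cos (y - 2 * β) :=
    cos_le_cos_of_nonneg_of_le_pi (by linarith) (by linarith) (by linarith)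
  have hsin : 0 < sin (x - β) := sin_pos_of_pos_of_lt_pi (by linarith) (by linarith)
  have hone : 0 < 1 + cos (x - β) := by
    have := cos_lt_cos_of_nonneg_of_le_pi (x := x - β) (by linarith) le_rfl (by linarith)
    rw [cos_pi] at this
    linarith
  calc (cos x + cos β) * sin β < (cos β + cos (x - 2 * β)) * sin x := by
        rw [← sub_pos, cos_add_cos_mul_sin_sub_cos_add_cos_mul_sin]
        exact mul_pos hsin hone
    _ ≤ (cos β + cos (y - 2 * β)) * sin x := by
        gcongr
        exact sin_nonneg_of_nonneg_of_le_pi hx₀.le hxπ.le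

lemma cos_add_cos_sq_mul_sin_sq_lt (hβ : 0 ≤ β) (hβy : 2 * β ≤ y) (hyx : y ≤ x) (hx₀ : 0 < x)
    (hxπ : x < π) (hxβ : x + β ≤ π) :
    (cos x + cos β) ^ 2 * sin β ^ 2 < (cos β + cos (y - 2 * β)) ^ 2 * sin x ^ 2 := by
  have hsin : 0 ≤ sin β := sin_nonneg_of_nonneg_of_le_pi hβ (by linarith)
  rw [← mul_pow, ← mul_pow]
  exact pow_lt_pow_left₀ (cos_add_cos_mul_sin_lt_s18 hβ hβy hyx hx₀ hxπ)
    (mul_nonneg (cos_add_cos_nonneg hx₀.le hβ hxβ) hsin) two_ne_zero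

end Trigonometry

lemma f1_zero_left (a b : ℤ) (β₁ : ℝ) :
    f1 a b 0 β₁ = -(cos (2 * π / (a : ℝ)) + cos β₁) ^ 2 * sin β₁ ^ 2 +
      (cos β₁ + cos (2 * π / (b : ℝ) - 2 * β₁)) ^ 2 * sin (2 * π / (a : ℝ)) ^ 2 := by
  simp only [f1, B00, B11, cos_zero, mul_zero, sub_zero]
  ring

lemma f1_pi_div_left (a b : ℤ) (β₁ : ℝ) :
    f1 a b (π / (a : ℝ)) β₁ = -(cos (π / (a : ℝ)) + cos β₁) ^ 2 * sin β₁ ^ 2 := by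
  simp only [f1, B00, B11, mul_div_assoc, sub_self, cos_zero, sin_zero]
  ring

lemma f1_zero_right (a b : ℤ) (α₁ : ℝ) :
    f1 a b α₁ 0 = (cos α₁ + cos (2 * π / (b : ℝ))) ^ 2 *
      sin (2 * π / (a : ℝ) - 2 * α₁) ^ 2 := by
  simp only [f1, B00, B11, mul_zero, sub_zero, cos_zero, sin_zero]
  ring

lemma f1_zero_left_pos {a b : ℤ} {β₁ : ℝ} (ha : 3 ≤ a) (hab : a ≤ b)
    (hβ₁ : β₁ ∈ Set.Icc 0 (π / (b : ℝ))) : 0 < f1 a b 0 β₁ := by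
  obtain ⟨hβ₀, hβb⟩ := hβ₁
  have ha' : (3 : ℝ) ≤ a := mod_cast ha
  have hab' : (a : ℝ) ≤ b := mod_cast hab
  have hpos : 0 < π / (a : ℝ) := by positivity
  have hle : π / (b : ℝ) ≤ π / a := by gcongr
  have hthird : π / (a : ℝ) ≤ π / 3 := by gcongr
  have hlt : (cos (2 * π / a) + cos β₁) ^ 2 * sin β₁ ^ 2 <
      (cos β₁ + cos (2 * π / b - 2 * β₁)) ^ 2 * sin (2 * π / a) ^ 2 := by
    simp only [mul_div_assoc]
    apply cos_add_cos_sq_mul_sin_sq_lt <;> linarith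
  rw [f1_zero_left]
  linarith

lemma f1_pi_div_left_nonpos (a b : ℤ) (β₁ : ℝ) : f1 a b (π / (a : ℝ)) β₁ ≤ 0 := by
  rw [f1_pi_div_left, neg_mul, neg_nonpos]
  positivity

lemma f1_zero_right_nonneg (a b : ℤ) (α₁ : ℝ) : 0 ≤ f1 a b α₁ 0 := by
  rw [f1_zero_right]
  positivity

theorem stmt18_general (a b : ℤ) (ha : 3 ≤ a) (hab : a ≤ b) :
    (∀ β₁ ∈ Set.Icc 0 (π / (b : ℝ)),
      f1 a b 0 β₁ = -(cos (2 * π / (a : ℝ)) + cos β₁) ^ 2 * sin β₁ ^ 2 +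
          (cos β₁ + cos (2 * π / (b : ℝ) - 2 * β₁)) ^ 2 * sin (2 * π / (a : ℝ)) ^ 2 ∧
      f1 a b 0 β₁ > 0) ∧
    (∀ β₁ : ℝ,
      f1 a b (π / (a : ℝ)) β₁ = -(cos (π / (a : ℝ)) + cos β₁) ^ 2 * sin β₁ ^ 2 ∧
      f1 a b (π / (a : ℝ)) β₁ ≤ 0) ∧
    (∀ α₁ : ℝ,
      f1 a b α₁ 0 = (cos α₁ + cos (2 * π / (b : ℝ))) ^ 2 *
          sin (2 * π / (a : ℝ) - 2 * α₁) ^ 2 ∧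
      f1 a b α₁ 0 ≥ 0) :=
  ⟨fun β₁ hβ₁ ↦ ⟨f1_zero_left a b β₁, f1_zero_left_pos ha hab hβ₁⟩,
    fun β₁ ↦ ⟨f1_pi_div_left a b β₁, f1_pi_div_left_nonpos a b β₁⟩,
    fun α₁ ↦ ⟨f1_zero_right a b α₁, f1_zero_right_nonneg a b α₁⟩⟩

theorem stmt18 (a b : ℤ) (ha : 3 ≤ a) (hab : a < b) :
    (∀ β₁ ∈ Set.Icc 0 (π / (b : ℝ)),
      f1 a b 0 β₁ = -(cos (2 * π / (a : ℝ)) + cos β₁) ^ 2 * sin β₁ ^ 2 +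
          (cos β₁ + cos (2 * π / (b : ℝ) - 2 * β₁)) ^ 2 * sin (2 * π / (a : ℝ)) ^ 2 ∧
      f1 a b 0 β₁ > 0) ∧
    (∀ β₁ ∈ Set.Icc 0 (π / (b : ℝ)),
      f1 a b (π / (a : ℝ)) β₁ = -(cos (π / (a : ℝ)) + cos β₁) ^ 2 * sin β₁ ^ 2 ∧
      f1 a b (π / (a : ℝ)) β₁ ≤ 0) ∧
    (∀ α₁ ∈ Set.Icc 0 (π / (a : ℝ)),
      f1 a b α₁ 0 = (cos α₁ + cos (2 * π / (b : ℝ))) ^ 2 *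
          sin (2 * π / (a : ℝ) - 2 * α₁) ^ 2 ∧
      f1 a b α₁ 0 ≥ 0) := by
  obtain ⟨hleft, hright, hbottom⟩ := stmt18_general a b ha hab.le
  exact ⟨hleft, fun β₁ _ ↦ hright β₁, fun α₁ _ ↦ hbottom α₁⟩
end

section
/- Let a = 2 and let b ≥ 9 be an integer. Then for every α₁ ∈ [π/3, π/2], one has f₂(α₁, 0) < 0. -/
open Real

/-!
At `β₁ = 0` the function `f₂` is a difference of two squares, so with `α₂ = π - 2α` and `θ = 2π/b`
its negativity reads `|(cos α + cos α₂) sin θ| < (cos α + cos θ) sin α`. Put `x = cos α`. Since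
`cos α + cos α₂ = (1 - x)(1 + 2x)`, and `sin α ≥ sin² α = (1 - x)(1 + x)`, it is enough that
`(1 + 2x)|sin θ| < (1 + x)(x + cos θ)`. The difference of the two sides is
`x² + (1 + cos θ - 2|sin θ|) x + (cos θ - |sin θ|)`, which is positive for `x ≥ 0` as soon as
`|sin θ| < cos θ`, that is, `θ < π/4`, or `b > 8`.
-/

theorem f2_zero_right_eq_sq_sub_sq (a b : ℤ) (α : ℝ) :
    f2 a b α 0 =
      ((cos α + cos (2 * π / a - 2 * α)) * sin (2 * π / b)) ^ 2
        - ((cos α + cos (2 * π / b)) * sin α) ^ 2 := by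
  simp only [f2, B11, B00, mul_zero, sub_zero, cos_zero]
  ring

theorem cos_add_cos_pi_sub_two_mul (α : ℝ) :
    cos α + cos (π - 2 * α) = (1 - cos α) * (1 + 2 * cos α) := by
  rw [cos_pi_sub, cos_two_mul]
  ring

theorem abs_sin_lt_cos_of_abs_lt_pi_div_four {θ : ℝ} (hθ : |θ| < π / 4) : |sin θ| < cos θ := by
  obtain ⟨hθ_lower, hθ_upper⟩ := abs_lt.mp hθ
  have cos_two_pos : 0 < cos (2 * θ) := cos_pos_of_mem_Ioo ⟨by linarith, by linarith⟩
  have cos_nonneg : 0 ≤ cos θ := cos_nonneg_of_mem_Icc ⟨by linarith, by linarith⟩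
  rw [cos_two_mul', sub_pos] at cos_two_pos
  exact abs_lt_of_sq_lt_sq cos_two_pos cos_nonneg

theorem one_add_two_mul_mul_lt_one_add_mul_add {R : Type*} [CommRing R] [LinearOrder R]
    [IsStrictOrderedRing R] {x s c : R} (hx : 0 ≤ x) (hsc : s < c) (hc : c ≤ 1) :
    (1 + 2 * x) * s < (1 + x) * (x + c) := by
  have quadratic_nonneg : 0 ≤ x * (x + 1 + c - 2 * s) := mul_nonneg hx (by linarith)
  linarith

theorem abs_cos_add_cos_pi_sub_two_mul_mul_sin_lt {α θ : ℝ} (hα : α ∈ Set.Ioc 0 (π / 2))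
    (hθ : |sin θ| < cos θ) :
    |(cos α + cos (π - 2 * α)) * sin θ| < (cos α + cos θ) * sin α := by
  obtain ⟨hα_pos, hα_le⟩ := hα
  have cos_nonneg : 0 ≤ cos α := cos_nonneg_of_mem_Icc ⟨by linarith, hα_le⟩
  have sin_nonneg : 0 ≤ sin α := sin_nonneg_of_nonneg_of_le_pi hα_pos.le (by linarith)
  have one_sub_cos_pos : 0 < 1 - cos α := by
    rw [sub_pos, ← cos_zero]
    exact cos_lt_cos_of_nonneg_of_le_pi_div_two le_rfl hα_le hα_pos
  have sum_nonneg : 0 ≤ cos α + cos θ := add_nonneg cos_nonneg ((abs_nonneg _).trans hθ.le)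
  have factor_nonneg : 0 ≤ (1 - cos α) * (1 + 2 * cos α) :=
    mul_nonneg one_sub_cos_pos.le (by linarith)
  calc |(cos α + cos (π - 2 * α)) * sin θ|
      = (1 - cos α) * ((1 + 2 * cos α) * |sin θ|) := by
        rw [cos_add_cos_pi_sub_two_mul, abs_mul, abs_of_nonneg factor_nonneg, mul_assoc]
    _ < (1 - cos α) * ((1 + cos α) * (cos α + cos θ)) := by
        gcongr 1
        exact one_add_two_mul_mul_lt_one_add_mul_add cos_nonneg hθ (cos_le_one θ)
    _ = (cos α + cos θ) * sin α ^ 2 := by rw [sin_sq]; ring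
    _ ≤ (cos α + cos θ) * sin α :=
        mul_le_mul_of_nonneg_left (pow_le_of_le_one sin_nonneg (sin_le_one α) two_ne_zero)
          sum_nonneg

theorem stmt19_general {b : ℤ} (hb : 9 ≤ b) {α : ℝ} (hα : α ∈ Set.Ioc 0 (π / 2)) :
    f2 2 b α 0 < 0 := by
  have hb_real : (9 : ℝ) ≤ b := by exact_mod_cast hb
  have hθ : |2 * π / b| < π / 4 := by
    rw [abs_of_nonneg (by positivity), div_lt_iff₀ (by linarith)]
    nlinarith [pi_pos]
  have abs_lt := abs_cos_add_cos_pi_sub_two_mul_mul_sin_lt hα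
    (abs_sin_lt_cos_of_abs_lt_pi_div_four hθ)
  have α₂_eq : 2 * π / ((2 : ℤ) : ℝ) - 2 * α = π - 2 * α := by push_cast; ring
  rw [f2_zero_right_eq_sq_sub_sq, α₂_eq, sub_neg]
  exact sq_lt_sq.mpr (abs_lt.trans_le (le_abs_self _))

theorem stmt19 (b : ℤ) (hb : 9 ≤ b) :
    ∀ α₁ ∈ Set.Icc (π / 3) (π / 2), f2 2 b α₁ 0 < 0 :=
  fun _ hα => stmt19_general hb ⟨(by positivity : 0 < π / 3).trans_le hα.1, hα.2⟩
end
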